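/- arXiv:2601.07428 — 2 statements merged into one kernel-verified Lean document; each statement's English description precedes it below -/
import Mathlib

section
/- For every gradually fragmented ideal I on ω, add*_ω(I) ≥ add_t(𝒩), the transitive additivity of the null ideal on 2^ω. -/
open Cardinal Filter Set
open scoped ENNReal

noncomputable section

/-- An ideal on a (countable) set `X`, in the sense of the paper: a proper family of
subsets of `X` closed under taking subsets and finite unions and containing all
finite subsets of `X`. -/
structure IsIdealOn {X : Type} (I : Set (Set X)) : Prop where
  subset_mem : ∀ ⦃A B : Set X⦄, A ⊆ B → B ∈ I → A ∈ I
  union_mem : ∀ ⦃A B : Set X⦄, A ∈ I → B ∈ I → A ∪ B ∈ I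
  finite_mem : ∀ ⦃A : Set X⦄, A.Finite → A ∈ I
  proper : (univ : Set X) ∉ I

/-- The finite initial segment `x ↾ n` of `x : X^ω`, as a list (an element of `X^{<ω}`). -/
def seg {X : Type} (x : ℕ → X) (n : ℕ) : List X := (List.range n).map x

/-- The `I`-Miller null ideal `M_I`: the σ-ideal on `X^ω` generated by the sets
`M_φ = {x | ∀^∞ n, x n ∈ φ (x ↾ n)}`, where `φ : X^{<ω} → I`.  (A set is in the
generated σ-ideal iff it is covered by countably many generators.) -/
def MIdeal {X : Type} (I : Set (Set X)) : Set (Set (ℕ → X)) :=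
  {A | ∃ φ : ℕ → List X → Set X, (∀ n s, φ n s ∈ I) ∧
    A ⊆ ⋃ n, {x : ℕ → X | ∀ᶠ m in atTop, x m ∈ φ n (seg x m)}}

/-- The σ-ideal `K_I` on `X^ω` generated by the sets
`K_φ = {x | ∀^∞ n, x n ∈ φ n}`, where `φ : ω → I`. -/
def KIdeal {X : Type} (I : Set (Set X)) : Set (Set (ℕ → X)) :=
  {A | ∃ φ : ℕ → ℕ → Set X, (∀ n m, φ n m ∈ I) ∧
    A ⊆ ⋃ n, {x : ℕ → X | ∀ᶠ m in atTop, x m ∈ φ n m}}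

/-- Additivity `add(J)` of a (σ-)ideal `J`: the least cardinality of a subfamily of `J`
whose union is not in `J`. -/
def addIdeal {Y : Type} (J : Set (Set Y)) : Cardinal :=
  sInf {c | ∃ 𝒜 : Set (Set Y), 𝒜 ⊆ J ∧ ⋃₀ 𝒜 ∉ J ∧ Cardinal.mk 𝒜 = c}

/-- Covering number `cov(J)`: the least cardinality of a subfamily of `J` covering `Y`. -/
def covIdeal {Y : Type} (J : Set (Set Y)) : Cardinal :=
  sInf {c | ∃ 𝒜 : Set (Set Y), 𝒜 ⊆ J ∧ ⋃₀ 𝒜 = Set.univ ∧ Cardinal.mk 𝒜 = c}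

/-- Uniformity `non(J)`: the least cardinality of a subset of `Y` not in `J`. -/
def nonIdeal {Y : Type} (J : Set (Set Y)) : Cardinal :=
  sInf {c | ∃ S : Set Y, S ∉ J ∧ Cardinal.mk S = c}

/-- Cofinality `cof(J)`: the least cardinality of a cofinal (w.r.t. `⊆`) subfamily of `J`. -/
def cofIdeal {Y : Type} (J : Set (Set Y)) : Cardinal :=
  sInf {c | ∃ 𝒜 : Set (Set Y), 𝒜 ⊆ J ∧ (∀ B ∈ J, ∃ A ∈ 𝒜, B ⊆ A) ∧ Cardinal.mk 𝒜 = c}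

/-- `f ≤* g`: eventual domination on `ω^ω`. -/
def LeStar (f g : ℕ → ℕ) : Prop := ∀ᶠ n in atTop, f n ≤ g n

/-- The bounding number `𝔟`. -/
def bNum : Cardinal :=
  sInf {c | ∃ F : Set (ℕ → ℕ), (∀ g : ℕ → ℕ, ∃ f ∈ F, ¬ LeStar f g) ∧ Cardinal.mk F = c}

/-- The dominating number `𝔡`. -/
def dNum : Cardinal :=
  sInf {c | ∃ F : Set (ℕ → ℕ), (∀ f : ℕ → ℕ, ∃ g ∈ F, LeStar f g) ∧ Cardinal.mk F = c}

/-- `A ⊆* B`: almost inclusion (`A \ B` finite). -/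
def AlSub {X : Type} (A B : Set X) : Prop := (A \ B).Finite

/-- The set of cardinalities of witnessing families for `add*_ω(I)`: families `𝒜 ⊆ I`
such that for every countable `B̄ ⊆ I` some `A ∈ 𝒜` satisfies `A ⊄* B` for all `B ∈ B̄`.
`add*_ω(I)` is the minimum of this set (`∞` if it is empty). -/
def addStarOmegaFam {X : Type} (I : Set (Set X)) : Set Cardinal :=
  {c | ∃ 𝒜 : Set (Set X), 𝒜 ⊆ I ∧
    (∀ B : ℕ → Set X, (∀ n, B n ∈ I) → ∃ A ∈ 𝒜, ∀ n, ¬ AlSub A (B n)) ∧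
    Cardinal.mk 𝒜 = c}

/-- The set of cardinalities of witnessing families for `cof*_ω(I)`: families `𝒜` of
countable subsets of `I` such that for every countable `B̄ ⊆ I` there is `Ā ∈ 𝒜` with:
every `B ∈ B̄` satisfies `B ⊆* A` for some `A ∈ Ā`.  `cof*_ω(I)` is the minimum. -/
def cofStarOmegaFam {X : Type} (I : Set (Set X)) : Set Cardinal :=
  {c | ∃ 𝒜 : Set (Set (Set X)), (∀ As ∈ 𝒜, As.Countable ∧ As ⊆ I) ∧
    (∀ B : ℕ → Set X, (∀ n, B n ∈ I) → ∃ As ∈ 𝒜, ∀ n, ∃ A ∈ As, AlSub (B n) A) ∧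
    Cardinal.mk 𝒜 = c}

/-- The set of cardinalities of witnessing families for `non*_ω(I)`: families `𝒜` of
infinite subsets of `X` such that for every countable `B̄ ⊆ I` there is `A ∈ 𝒜` with
`A ∩ B` finite for all `B ∈ B̄`.  `non*_ω(I)` is the minimum of this set. -/
def nonStarOmegaFam {X : Type} (I : Set (Set X)) : Set Cardinal :=
  {c | ∃ 𝒜 : Set (Set X), (∀ A ∈ 𝒜, A.Infinite) ∧
    (∀ B : ℕ → Set X, (∀ n, B n ∈ I) → ∃ A ∈ 𝒜, ∀ n, (A ∩ B n).Finite) ∧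
    Cardinal.mk 𝒜 = c}

/-- The set of cardinalities of witnessing families for `cov*(I)`: families `𝒜 ⊆ I` such
that every infinite `B ⊆ X` has infinite intersection with some member of `𝒜`.
`cov*(I)` is the minimum of this set (`∞` if it is empty, i.e. if `I` is not tall). -/
def covStarFam {X : Type} (I : Set (Set X)) : Set Cardinal :=
  {c | ∃ 𝒜 : Set (Set X), 𝒜 ⊆ I ∧
    (∀ B : Set X, B.Infinite → ∃ A ∈ 𝒜, (A ∩ B).Infinite) ∧ Cardinal.mk 𝒜 = c}

/-- The set of cardinalities of witnessing families for `non*(I)`: families `𝒜` of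
infinite subsets of `X` such that every `B ∈ I` has finite intersection with some
member of `𝒜`.  `non*(I)` is the minimum of this set. -/
def nonStarFam {X : Type} (I : Set (Set X)) : Set Cardinal :=
  {c | ∃ 𝒜 : Set (Set X), (∀ A ∈ 𝒜, A.Infinite) ∧
    (∀ B ∈ I, ∃ A ∈ 𝒜, (A ∩ B).Finite) ∧ Cardinal.mk 𝒜 = c}

/-- The meager ideal of the product space `X^ω`, where `X` carries the discrete
topology (for countable `X` this is a Polish space). -/
def meagerIdeal (X : Type) : Set (Set (ℕ → X)) :=
  letI : TopologicalSpace X := ⊥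
  {A : Set (ℕ → X) | IsMeagre A}

/-- The Fubini product `I ⊗ J` of two ideals. -/
def Fubini {X Y : Type} (I : Set (Set X)) (J : Set (Set Y)) : Set (Set (X × Y)) :=
  {A | {x : X | {y : Y | (x, y) ∈ A} ∉ J} ∈ I}

/-- The ideal `Fin` of finite subsets of `X`. -/
def finIdeal (X : Type) : Set (Set X) := {A : Set X | A.Finite}

/-- The nowhere dense ideal on `2^{<ω}`: `A` belongs to it iff for every `s` there is an
extension `t ⊇ s` none of whose extensions belongs to `A`. -/
def nwdIdeal : Set (Set (List Bool)) :=
  {A | ∀ s : List Bool, ∃ t : List Bool, s <+: t ∧ ∀ u : List Bool, t <+: u → u ∉ A}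

/-- A submeasure: monotone, finitely subadditive, vanishing on `∅`. -/
def IsSubmeasure (φ : Set ℕ → ℝ≥0∞) : Prop :=
  φ ∅ = 0 ∧ (∀ A B : Set ℕ, A ⊆ B → φ A ≤ φ B) ∧ ∀ A B : Set ℕ, φ (A ∪ B) ≤ φ A + φ B

/-- `I` is gradually fragmented: there are a partition `⟨P n⟩` of `ω` into nonempty finite
sets and submeasures `φ n` with `A ∈ I ↔ sup_n φ n (A ∩ P n) < ∞`, together with
`f : ω → ω` such that for all `n, i`, for all but finitely many `j`: any family of at
most `i` subsets of `P j`, each of `φ j`-value `≤ n`, has union of `φ j`-value `≤ f n`. -/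
def GraduallyFragmented (I : Set (Set ℕ)) : Prop :=
  ∃ (P : ℕ → Set ℕ) (φ : ℕ → Set ℕ → ℝ≥0∞) (f : ℕ → ℕ),
    (∀ n, (P n).Finite) ∧ (∀ n, (P n).Nonempty) ∧
    (∀ n m, n ≠ m → Disjoint (P n) (P m)) ∧ (⋃ n, P n) = Set.univ ∧
    (∀ n, IsSubmeasure (φ n)) ∧
    (∀ A : Set ℕ, A ∈ I ↔ (⨆ n, φ n (A ∩ P n)) < ⊤) ∧
    (∀ n i : ℕ, ∀ᶠ j in atTop, ∀ ℬ : Finset (Set ℕ), ℬ.card ≤ i →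
      (∀ B ∈ ℬ, B ⊆ P j) → (∀ B ∈ ℬ, φ j B ≤ (n : ℝ≥0∞)) →
      φ j (⋃ B ∈ ℬ, B) ≤ ((f n : ℕ) : ℝ≥0∞))

/-- The basic clopen cylinder of `2^ω` determined by a finite binary string. -/
def cylSet (s : List Bool) : Set (ℕ → Bool) :=
  {x | ∀ i : Fin s.length, x i.val = s.get i}

/-- `A ⊆ 2^ω` is null for the uniform (coin-flipping) product measure: for every `ε > 0`
it is covered by countably many cylinders of total weight `≤ ε` (the cylinder of a
string `s` has weight `2^{-|s|}`). -/
def IsNullCantor (A : Set (ℕ → Bool)) : Prop :=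
  ∀ ε : ℝ≥0∞, 0 < ε → ∃ s : ℕ → List Bool,
    A ⊆ (⋃ n, cylSet (s n)) ∧ (∑' n : ℕ, (2⁻¹ : ℝ≥0∞) ^ (s n).length) ≤ ε

/-- Coordinatewise addition modulo 2 on `2^ω`. -/
def xorAdd (x y : ℕ → Bool) : ℕ → Bool := fun n => xor (x n) (y n)

/-- The transitive additivity `add_t(𝒩)` of the null ideal of `2^ω`:
`min {|A| : A ⊆ 2^ω ∧ ∃ X ∈ 𝒩, A + X ∉ 𝒩}`. -/
def addTNull : Cardinal :=
  sInf {c | ∃ A : Set (ℕ → Bool),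
    (∃ N : Set (ℕ → Bool), IsNullCantor N ∧ ¬ IsNullCantor (Set.image2 xorAdd A N)) ∧
    Cardinal.mk A = c}

/-- Kada's cardinal invariant `𝔩`: the least `κ` such that for every `g ∈ ω^ω` there is a
family `𝒮`, of size `κ`, of slaloms `S` with `S i ⊆ {0, …, g i}` and `|S i| ≤ i`, such
that every `f ≤* g` satisfies `f ∈* S` for some `S ∈ 𝒮`. -/
def lNum : Cardinal :=
  sInf {c : Cardinal | ∀ g : ℕ → ℕ, ∃ 𝒮 : Set (ℕ → Finset ℕ),
    (∀ S ∈ 𝒮, ∀ i : ℕ, S i ⊆ Finset.range (g i + 1) ∧ (S i).card ≤ i) ∧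
    (∀ f : ℕ → ℕ, LeStar f g → ∃ S ∈ 𝒮, ∀ᶠ i in atTop, f i ∈ S i) ∧
    Cardinal.mk 𝒮 = c}

/-- Membership in `C ⊆ 2^ω` only depends on the first `n` coordinates. -/
def DeterminedBy (C : Set (ℕ → Bool)) (n : ℕ) : Prop :=
  ∀ x y : ℕ → Bool, (∀ i < n, x i = y i) → (x ∈ C ↔ y ∈ C)

/-- Extension of a finite binary string by `false`s. -/
def extendFalse {n : ℕ} (s : Fin n → Bool) : ℕ → Bool :=
  fun i => if h : i < n then s ⟨i, h⟩ else false

/-- `C ⊆ 2^ω` has uniform product measure `1/2`: for some `n`, membership in `C` depends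
only on the first `n` coordinates and exactly half of the `2^n` cylinders of level `n`
are included in `C`. -/
def HalfMeasure (C : Set (ℕ → Bool)) : Prop :=
  ∃ n : ℕ, DeterminedBy C n ∧
    2 * Nat.card {s : Fin n → Bool // extendFalse s ∈ C} = 2 ^ n

/-- Clopenness in the Cantor space `2^ω` (`Bool` discrete, product topology). -/
def IsClopenCantor (C : Set (ℕ → Bool)) : Prop :=
  letI : TopologicalSpace Bool := ⊥
  IsClopen C

/-- Closedness in the Cantor space `2^ω`. -/
def IsClosedCantor (C : Set (ℕ → Bool)) : Prop :=
  letI : TopologicalSpace Bool := ⊥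
  IsClosed C

/-- `Ω`: the (countable) set of clopen subsets of `2^ω` of measure `1/2`. -/
abbrev SoleckiBase : Type := {C : Set (ℕ → Bool) // IsClopenCantor C ∧ HalfMeasure C}

/-- The Solecki ideal `𝒮` on `Ω`: the ideal generated by the sets
`I_y = {C ∈ Ω : y ∈ C}` for `y ∈ 2^ω`. -/
def SoleckiIdeal : Set (Set SoleckiBase) :=
  {A | ∃ F : Finset (ℕ → Bool), A ⊆ ⋃ y ∈ F, {C : SoleckiBase | y ∈ C.val}}

/-- `cov_ω(𝒩)`: the least cardinality of a family of Lebesgue-null sets of reals such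
that every countable set of reals is contained in one of them. -/
def covOmegaNull : Cardinal :=
  sInf {c | ∃ 𝒜 : Set (Set ℝ), (∀ N ∈ 𝒜, MeasureTheory.volume N = 0) ∧
    (∀ B : Set ℝ, B.Countable → ∃ N ∈ 𝒜, B ⊆ N) ∧ Cardinal.mk 𝒜 = c}

/-- `non(𝒩)`: the least cardinality of a non-null set of reals. -/
def nonNullReal : Cardinal :=
  sInf {c | ∃ S : Set ℝ, MeasureTheory.volume S ≠ 0 ∧ Cardinal.mk S = c}

/-- The eventually different ideal `ℰ𝒟` on `ω × ω`. -/
def EDIdeal : Set (Set (ℕ × ℕ)) :=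
  {A | ∃ k : ℕ, ∀ᶠ n in atTop,
    {m : ℕ | (n, m) ∈ A}.Finite ∧ {m : ℕ | (n, m) ∈ A}.ncard ≤ k}

/-- Characteristic function identifying `P(ω)` with `2^ω`. -/
def chiSet (A : Set ℕ) : ℕ → Bool :=
  fun n => @decide (n ∈ A) (Classical.propDecidable _)

/-- `I ⊆ P(ω)` is `F_σ`: under the identification `P(ω) ≅ 2^ω`, `I` is a countable
union of closed subsets of the Cantor space. -/
def IsFSigmaIdeal (I : Set (Set ℕ)) : Prop :=
  ∃ C : ℕ → Set (ℕ → Bool), (∀ n, IsClosedCantor (C n)) ∧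
    ∀ A : Set ℕ, A ∈ I ↔ chiSet A ∈ ⋃ n, C n

/-- The underlying countable set of `Fin^{⊗(n+1)}`: `FinPowType 0 = ω`,
`FinPowType (n+1) = ω × FinPowType n`. -/
def FinPowType : ℕ → Type
  | 0 => ℕ
  | n + 1 => ℕ × FinPowType n

/-- The iterated Fubini power of `Fin`: `FinPowIdeal 0 = Fin`, and
`FinPowIdeal (n+1) = Fin ⊗ FinPowIdeal n`; thus `Fin^{⊗k} = FinPowIdeal (k-1)`. -/
def FinPowIdeal : (n : ℕ) → Set (Set (FinPowType n))
  | 0 => finIdeal ℕ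
  | n + 1 => Fubini (finIdeal ℕ) (FinPowIdeal n)

/-- `π` `k`-constantly bounding-predicts `f`: for all but finitely many `i` there is
`j ∈ [i, i + k)` with `f j ≤ π (f ↾ j)`. -/
def ConstBddPred (k : ℕ) (π : List ℕ → ℕ) (f : ℕ → ℕ) : Prop :=
  ∀ᶠ i in atTop, ∃ j : ℕ, i ≤ j ∧ j < i + k ∧ f j ≤ π (seg f j)

/-- The constant bounding evasion number `𝔢^const_≤(k)`. -/
def eConstLe (k : ℕ) : Cardinal :=
  sInf {c | ∃ F : Set (ℕ → ℕ),
    (∀ π : List ℕ → ℕ, ∃ f ∈ F, ¬ ConstBddPred k π f) ∧ Cardinal.mk F = c}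

/-- The constant bounding prediction number `𝔳^const_≤(k)`. -/
def vConstLe (k : ℕ) : Cardinal :=
  sInf {c | ∃ Ps : Set (List ℕ → ℕ),
    (∀ f : ℕ → ℕ, ∃ π ∈ Ps, ConstBddPred k π f) ∧ Cardinal.mk Ps = c}

/-- The asymptotic density zero ideal `𝒵` on `ω`. -/
def densityZero : Set (Set ℕ) :=
  {A : Set ℕ | Tendsto (fun n : ℕ => ((A ∩ Iio n).ncard : ℝ) / (n : ℝ)) atTop (nhds (0 : ℝ))}

/-- The σ-ideal `ℰ` on `2^ω` generated by the closed null sets. -/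
def EIdeal : Set (Set (ℕ → Bool)) :=
  {A | ∃ C : ℕ → Set (ℕ → Bool),
    (∀ n, IsClosedCantor (C n) ∧ IsNullCantor (C n)) ∧ A ⊆ ⋃ n, C n}



open MeasureTheory

/-- The fair coin measure on `Bool`. -/
def coin : Measure Bool := (2⁻¹ : ℝ≥0∞) • (Measure.dirac true + Measure.dirac false)

instance coin_prob : IsProbabilityMeasure coin := by
  constructor
  simp only [coin, Measure.smul_apply, Measure.add_apply, measure_univ, smul_eq_mul]
  rw [one_add_one_eq_two]
  exact ENNReal.inv_mul_cancel (by norm_num) (by norm_num)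

lemma coin_singleton (b : Bool) : coin {b} = 2⁻¹ := by
  cases b <;> simp [coin]

/-- Product coin measure. -/
def cm (α : Type) : Measure (α → Bool) := Measure.infinitePi (fun _ => coin)

instance cm_prob (α : Type) : IsProbabilityMeasure (cm α) := by
  unfold cm; infer_instance

lemma cm_sum (α β : Type) :
    ((cm α).prod (cm β)).map (fun z : (α → Bool) × (β → Bool) => (Sum.elim z.1 z.2 : α ⊕ β → Bool))
      = cm (α ⊕ β) := by
  have hmeas : Measurable (fun z : (α → Bool) × (β → Bool) =>
      (Sum.elim z.1 z.2 : α ⊕ β → Bool)) := by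
    refine measurable_pi_lambda _ fun i => ?_
    rcases i with i | i
    · simp only [Sum.elim_inl]; fun_prop
    · simp only [Sum.elim_inr]; fun_prop
  apply Measure.eq_infinitePi
  intro s t ht
  rw [Measure.map_apply hmeas (.pi s.countable_toSet fun _ _ => ht _)]
  have : (fun z : (α → Bool) × (β → Bool) => (Sum.elim z.1 z.2 : α ⊕ β → Bool)) ⁻¹'
      ((s : Set (α ⊕ β)).pi t) =
      ((s.toLeft : Set α).pi (fun i => t (.inl i))) ×ˢ
      ((s.toRight : Set β).pi (fun i => t (.inr i))) := by
    ext z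
    simp [Set.mem_pi]
  rw [this, Measure.prod_prod, cm, cm, Measure.infinitePi_pi _ (fun i _ => ht _),
    Measure.infinitePi_pi _ (fun i _ => ht _)]
  conv_rhs => rw [← Finset.toLeft_disjSum_toRight (u := s), Finset.prod_disjSum]

lemma cm_reindex {α β : Type} (e : α ≃ β) :
    (cm β).map (fun (ω : β → Bool) i => ω (e i)) = cm α :=
  Measure.map_infinitePi_infinitePi_of_inj (P := fun _ : β => coin) e.injective

/-- The coding map. -/
def Psi {α β : Type} (e : ℕ ≃ α ⊕ β) (z : (α → Bool) × (β → Bool)) : ℕ → Bool :=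
  fun n => Sum.elim z.1 z.2 (e n)

lemma Psi_cont {α β : Type} (e : ℕ ≃ α ⊕ β) : Continuous (Psi e) := by
  refine continuous_pi fun n => ?_
  unfold Psi
  rcases e n with i | i
  · simp only [Sum.elim_inl]; fun_prop
  · simp only [Sum.elim_inr]; fun_prop

lemma Psi_inj {α β : Type} (e : ℕ ≃ α ⊕ β) : Function.Injective (Psi e) := by
  intro z w h
  have h' : ∀ i, Sum.elim z.1 z.2 i = Sum.elim w.1 w.2 i := fun i => by
    have := congrFun h (e.symm i)
    simpa [Psi] using this
  refine Prod.ext (funext fun i => h' (.inl i)) (funext fun i => h' (.inr i))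

lemma Psi_xor {α β : Type} (e : ℕ ≃ α ⊕ β) (z w : (α → Bool) × (β → Bool)) :
    xorAdd (Psi e z) (Psi e w) =
      Psi e (fun i => xor (z.1 i) (w.1 i), fun i => xor (z.2 i) (w.2 i)) := by
  funext n
  unfold xorAdd Psi
  rcases e n with i | i <;> rfl

lemma Psi_map {α β : Type} [Countable α] [Countable β] (e : ℕ ≃ α ⊕ β) :
    ((cm α).prod (cm β)).map (Psi e) = cm ℕ := by
  rw [← cm_reindex e, ← cm_sum, Measure.map_map]
  · rfl
  · fun_prop
  · refine measurable_pi_lambda _ fun i => ?_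
    rcases i with i | i
    · simp only [Sum.elim_inl]; fun_prop
    · simp only [Sum.elim_inr]; fun_prop

lemma cm_box {α : Type} (s : Finset α) (f : α → Bool) :
    cm α {x | ∀ i ∈ s, x i = f i} = 2⁻¹ ^ s.card := by
  have : {x : α → Bool | ∀ i ∈ s, x i = f i} = (s : Set α).pi (fun i => {f i}) := by
    ext x; simp [Set.mem_pi]
  rw [this, cm, Measure.infinitePi_pi _ (fun i _ => measurableSet_singleton _)]
  simp [coin_singleton]

lemma cylSet_eq (s : List Bool) :
    cylSet s = {x | ∀ i ∈ Finset.range s.length, x i = s.getD i false} := by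
  ext x
  simp only [cylSet, Set.mem_ofPred_eq, Finset.mem_range]
  constructor
  · intro h i hi
    rw [h ⟨i, hi⟩]; simp [hi]
  · intro h i
    rw [h i i.2]; simp

lemma cm_cyl (s : List Bool) : cm ℕ (cylSet s) = 2⁻¹ ^ s.length := by
  rw [cylSet_eq, cm_box]; simp

lemma cyl_open (s : List Bool) : IsOpen (cylSet s) := by
  have : cylSet s = ⋂ i : Fin s.length, (fun x : ℕ → Bool => x i.val) ⁻¹' {s.get i} := by
    ext x; simp [cylSet]
  rw [this]
  exact isOpen_iInter_of_finite fun i => (isOpen_discrete _).preimage (continuous_apply _)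

lemma seg_length (x : ℕ → Bool) (n : ℕ) : (seg x n).length = n := by simp [seg]

lemma mem_cyl_seg (x y : ℕ → Bool) (n : ℕ) : y ∈ cylSet (seg x n) ↔ ∀ i < n, y i = x i := by
  rw [cylSet_eq]
  simp only [Finset.mem_range, seg_length, Set.mem_ofPred_eq]
  refine forall₂_congr fun i hi => ?_
  simp [seg, hi]

/-- every open set is a union of cylinders -/
lemma open_cyl {U : Set (ℕ → Bool)} (hU : IsOpen U) {x : ℕ → Bool} (hx : x ∈ U) :
    ∃ n, cylSet (seg x n) ⊆ U := by
  obtain ⟨I, u, hu, hsub⟩ := isOpen_pi_iff.1 hU x hx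
  refine ⟨I.sup id + 1, fun y hy => hsub ?_⟩
  rw [mem_cyl_seg] at hy
  intro i hi
  rw [hy i (Nat.lt_succ_of_le (Finset.le_sup (f := id) hi))]
  exact (hu i hi).2

lemma null_of_cm {N : Set (ℕ → Bool)} (hN : cm ℕ N = 0) : IsNullCantor N := by
  classical
  intro ε hε
  by_cases hεt : ε = ⊤
  · refine ⟨fun _ => [], fun x _ => Set.mem_iUnion.2 ⟨0, by simp [cylSet]⟩, by simp [hεt]⟩
  have hε2 : 0 < ε / 2 := ENNReal.half_pos hε.ne'
  obtain ⟨U, hNU, hU, hUε⟩ := Set.exists_isOpen_lt_add (μ := cm ℕ) N (by simp [hN]) hε2.ne'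
  rw [hN, zero_add] at hUε
  -- minimal cylinders
  let M : Set (List Bool) := {s | ∃ x n, s = seg x n ∧ cylSet (seg x n) ⊆ U ∧
    ∀ m < n, ¬ cylSet (seg x m) ⊆ U}
  have hcov : U ⊆ ⋃ s : M, cylSet s.1 := by
    intro x hx
    have h := open_cyl hU hx
    refine Set.mem_iUnion.2 ⟨⟨seg x (Nat.find h), x, _, rfl, Nat.find_spec h,
      fun m hm => Nat.find_min h hm⟩, ?_⟩
    simp [mem_cyl_seg]
  have hdisj : Pairwise (fun s t : M => Disjoint (cylSet s.1) (cylSet t.1)) := by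
    rintro ⟨_, x, n, rfl, h1, h2⟩ ⟨_, y, m, rfl, h3, h4⟩ hne
    rw [Set.disjoint_left]
    intro z hz hz'
    apply hne
    simp only [mem_cyl_seg] at hz hz'
    have key : ∀ (x : ℕ → Bool) (k n : ℕ), (∀ i < n, z i = x i) → k ≤ n → seg x k = seg z k := by
      intro x k n h hk
      simp only [seg]
      refine List.map_congr_left fun i hi => ?_
      rw [List.mem_range] at hi
      exact (h i (by omega)).symm
    have hnm : n = m := by
      rcases lt_trichotomy n m with h | h | h
      · exfalso; apply h4 n h
        rw [key y n m hz' h.le, ← key x n n hz le_rfl]; exact h1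
      · exact h
      · exfalso; apply h2 m h
        rw [key x m n hz h.le, ← key y m m hz' le_rfl]; exact h3
    subst hnm
    simp only [Subtype.mk.injEq]
    rw [key x n n hz le_rfl, key y n n hz' le_rfl]
  have hsum : ∑' s : M, (2⁻¹ : ℝ≥0∞) ^ s.1.length ≤ ε / 2 := by
    calc ∑' s : M, (2⁻¹ : ℝ≥0∞) ^ s.1.length = ∑' s : M, cm ℕ (cylSet s.1) := by
          simp only [cm_cyl]
      _ = cm ℕ (⋃ s : M, cylSet s.1) :=
          (measure_iUnion hdisj fun s => (cyl_open s.1).measurableSet).symm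
      _ ≤ cm ℕ U := by
          refine measure_mono (Set.iUnion_subset ?_)
          rintro ⟨_, x, n, rfl, h1, h2⟩
          exact h1
      _ ≤ ε / 2 := hUε.le
  obtain ⟨k, hk⟩ := ENNReal.exists_inv_two_pow_lt hε2.ne'
  obtain ⟨e⟩ : Nonempty (ℕ ≃ M ⊕ ℕ) := nonempty_equiv_of_countable
  let g : M ⊕ ℕ → List Bool := Sum.elim (fun s => s.1) (fun n => List.replicate (n + 1 + k) false)
  refine ⟨fun n => g (e n), ?_, ?_⟩
  · intro x hx
    obtain ⟨s, hs⟩ := Set.mem_iUnion.1 (hcov (hNU hx))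
    refine Set.mem_iUnion.2 ⟨e.symm (.inl s), ?_⟩
    simpa [g] using hs
  · rw [Equiv.tsum_eq e (fun i => (2⁻¹ : ℝ≥0∞) ^ (g i).length),
      Summable.tsum_sum ENNReal.summable ENNReal.summable]
    simp only [g, Sum.elim_inl, Sum.elim_inr, List.length_replicate]
    rw [← ENNReal.add_halves ε]
    refine add_le_add hsum ?_
    calc ∑' n : ℕ, (2⁻¹ : ℝ≥0∞) ^ (n + 1 + k) = (∑' n : ℕ, (2⁻¹ : ℝ≥0∞) ^ (n + 1)) * 2⁻¹ ^ k := by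
          rw [← ENNReal.tsum_mul_right]; simp only [pow_add]
      _ = 2⁻¹ ^ k := by rw [ENNReal.tsum_geometric_add_one]; simp [ENNReal.one_sub_inv_two, ENNReal.inv_mul_cancel]
      _ ≤ ε / 2 := hk.le


/-- Index set of the tables. -/
abbrev TIx (W : ℕ → Finset ℕ) : Type := (Σ n, (W n → Bool)) × ℕ

/-- The space of pairs (address, table). -/
abbrev XSp (W : ℕ → Finset ℕ) : Type := (ℕ → Bool) × (TIx W → Bool)

/-- The basic clopen sets. -/
def GSet (W : ℕ → Finset ℕ) (n : ℕ) (s : W n → Bool) : Set (XSp W) :=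
  {z | ∀ i < n, z.2 (⟨n, fun w => xor (z.1 w) (s w)⟩, i) = false}

lemma GSet_clopen (W : ℕ → Finset ℕ) (n : ℕ) (s : W n → Bool) : IsClopen (GSet W n s) := by
  have hc : ∀ i, Continuous (fun z : XSp W => z.2 (⟨n, fun w => xor (z.1 w) (s w)⟩, i)) := by
    intro i
    have h1 : Continuous (fun y : (W n → Bool) × (TIx W → Bool) => y.2 (⟨n, y.1⟩, i)) := by
      rw [continuous_prod_of_discrete_left]
      intro a
      exact continuous_apply (A := fun _ : TIx W => Bool) ((⟨n, a⟩, i) : TIx W)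
    have h2 : Continuous (fun z : XSp W => ((fun w : W n => xor (z.1 w) (s w)), z.2)) := by
      refine Continuous.prodMk (continuous_pi fun w => ?_) continuous_snd
      have h3 : Continuous (fun b : Bool => xor b (s w)) := continuous_of_discreteTopology
      exact h3.comp ((continuous_apply _).comp continuous_fst)
    exact h1.comp h2
  have : GSet W n s = ⋂ i : Fin n,
      (fun z : XSp W => z.2 (⟨n, fun w => xor (z.1 w) (s w)⟩, i.val)) ⁻¹' {false} := by
    ext z
    simp only [GSet, Set.mem_iInter, Set.mem_preimage, Set.mem_singleton_iff]
    exact ⟨fun h i => h i i.2, fun h i hi => h ⟨i, hi⟩⟩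
  rw [this]
  exact isClopen_iInter_of_finite fun i => (isClopen_discrete _).preimage (hc i)

lemma table_box {κ : Type} (P : Finset κ) (d : κ → ℕ) :
    cm (κ × ℕ) {T | ∀ p ∈ P, ∃ i < d p, T (p, i) = true} = ∏ p ∈ P, (1 - 2⁻¹ ^ d p) := by
  have hm : ∀ p, MeasurableSet {t : ℕ → Bool | ∃ i < d p, t i = true} := by
    intro p
    have : {t : ℕ → Bool | ∃ i < d p, t i = true} =
        ⋃ i ∈ Finset.range (d p), (fun t : ℕ → Bool => t i) ⁻¹' {true} := by
      ext t; simp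
    rw [this]
    exact Finset.measurableSet_biUnion _ fun i _ =>
      (measurableSet_singleton _).preimage (measurable_pi_apply i)
  have h1 : {T : κ × ℕ → Bool | ∀ p ∈ P, ∃ i < d p, T (p, i) = true} =
      (MeasurableEquiv.curry κ ℕ Bool) ⁻¹'
        ((P : Set κ).pi (fun p => {t : ℕ → Bool | ∃ i < d p, t i = true})) := by
    ext T
    simp [Set.mem_pi]
  have h2 := Measure.infinitePi_map_curry (ι := κ) (κ := ℕ) (fun _ _ => coin)
  rw [h1, ← MeasurableEquiv.map_apply, cm, h2, Measure.infinitePi_pi _ (fun p _ => hm p)]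
  refine Finset.prod_congr rfl fun p _ => ?_
  have h3 : {t : ℕ → Bool | ∃ i < d p, t i = true} =
      {t : ℕ → Bool | ∀ i ∈ Finset.range (d p), t i = false}ᶜ := by
    ext t; simp
  change cm ℕ _ = _
  have h4 : MeasurableSet {t : ℕ → Bool | ∀ i ∈ Finset.range (d p), t i = false} := by
    have := (hm p).compl
    rw [h3, compl_compl] at this
    exact this
  rw [h3, prob_compl_eq_one_sub h4]
  have := cm_box (Finset.range (d p)) (fun _ => false)
  simp only [Finset.card_range] at this
  rw [this]

lemma factor_le (n : ℕ) {c : ℕ} (hc : 2 ^ n ≤ c) :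
    (1 - (2⁻¹ : ℝ≥0∞) ^ n) ^ c ≤ ENNReal.ofReal (Real.exp (-1)) := by
  have h0 : (1 - (2⁻¹ : ℝ≥0∞) ^ n) = ENNReal.ofReal (1 - (2⁻¹ : ℝ) ^ n) := by
    rw [ENNReal.ofReal_sub _ (by positivity), ENNReal.ofReal_pow (by positivity),
      ENNReal.ofReal_inv_of_pos (by norm_num)]
    simp
  have hle1 : (2⁻¹ : ℝ) ^ n ≤ 1 := pow_le_one₀ (by norm_num) (by norm_num)
  have hpos : (0 : ℝ) < (2⁻¹ : ℝ) ^ n := by positivity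
  rw [h0, ← ENNReal.ofReal_pow (by linarith)]
  apply ENNReal.ofReal_le_ofReal
  calc (1 - (2⁻¹ : ℝ) ^ n) ^ c ≤ (1 - (2⁻¹ : ℝ) ^ n) ^ (2 ^ n) :=
        pow_le_pow_of_le_one (by linarith) (by linarith) hc
    _ ≤ (Real.exp (-(2⁻¹ : ℝ) ^ n)) ^ (2 ^ n) := by
        refine pow_le_pow_left₀ (by linarith) ?_ _
        have := Real.add_one_le_exp (-(2⁻¹ : ℝ) ^ n)
        linarith
    _ = Real.exp (-1) := by
        rw [← Real.exp_nat_mul]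
        congr 1
        push_cast
        rw [mul_neg, ← mul_pow]
        norm_num

/-- Infinite products of large slaloms give null sets. -/
lemma DSet_null (W : ℕ → Finset ℕ) (S : ∀ n, Set (W n → Bool))
    (hS : ∃ᶠ n in atTop, 2 ^ n < (S n).ncard) :
    ((cm ℕ).prod (cm (TIx W))) {z | ∀ n, ∀ s ∈ S n, z ∉ GSet W n s} = 0 := by
  classical
  have hD : {z : XSp W | ∀ n, ∀ s ∈ S n, z ∉ GSet W n s} =
      ⋂ n, ⋂ s ∈ S n, (GSet W n s)ᶜ := by
    ext z; simp
  have hDm : MeasurableSet {z : XSp W | ∀ n, ∀ s ∈ S n, z ∉ GSet W n s} := by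
    rw [hD]
    refine MeasurableSet.iInter fun n => MeasurableSet.biInter (Set.to_countable _) fun s _ => ?_
    exact (GSet_clopen W n s).compl.isOpen.measurableSet
  refine Measure.measure_prod_null_of_ae_null hDm (Filter.Eventually.of_forall fun a => ?_)
  simp only [Pi.zero_apply]
  have hinf : {n | 2 ^ n < (S n).ncard}.Infinite := Nat.frequently_atTop_iff_infinite.1 hS
  have hbound : ∀ k : ℕ, cm (TIx W) (Prod.mk a ⁻¹' {z : XSp W | ∀ n, ∀ s ∈ S n, z ∉ GSet W n s})
      ≤ ENNReal.ofReal (Real.exp (-1)) ^ k := by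
    intro k
    obtain ⟨F, hF, hFk⟩ := hinf.exists_subset_card_eq k
    let tw : ∀ n, (W n → Bool) → (W n → Bool) := fun n s w => xor (a w) (s w)
    have htw : ∀ n, Function.Injective (tw n) := by
      intro n s s' h
      funext w
      have := congrFun h w
      simpa [tw] using this
    let P : Finset (Σ n, (W n → Bool)) := F.sigma fun n => (S n).toFinset.image (tw n)
    calc _ ≤ cm (TIx W) {T | ∀ p ∈ P, ∃ i < p.1, T (p, i) = true} := by
          refine measure_mono fun T hT => ?_
          rintro ⟨n, q⟩ hp
          simp only [P, Finset.mem_sigma, Finset.mem_image, Set.mem_toFinset] at hp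
          obtain ⟨_, s, hs, rfl⟩ := hp
          have h1 : (a, T) ∉ GSet W n s := hT n s hs
          by_contra hcon
          apply h1
          intro i hi
          by_contra h2
          exact hcon ⟨i, hi, by simpa using h2⟩
      _ = ∏ p ∈ P, (1 - 2⁻¹ ^ p.1) := table_box P (fun p => p.1)
      _ = ∏ n ∈ F, (1 - (2⁻¹ : ℝ≥0∞) ^ n) ^ (S n).ncard := by
          rw [Finset.prod_sigma]
          refine Finset.prod_congr rfl fun n _ => ?_
          change ∏ _s ∈ Finset.image (tw n) (S n).toFinset, (1 - (2⁻¹ : ℝ≥0∞) ^ n) = _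
          rw [Finset.prod_const, Finset.card_image_of_injective _ (htw n),
            Set.ncard_eq_toFinset_card']
      _ ≤ ∏ n ∈ F, ENNReal.ofReal (Real.exp (-1)) :=
          Finset.prod_le_prod' fun n hn => factor_le n (hF hn).le
      _ = _ := by rw [Finset.prod_const, hFk]
  have hlim : Tendsto (fun k => ENNReal.ofReal (Real.exp (-1)) ^ k) atTop (nhds 0) := by
    apply ENNReal.tendsto_pow_atTop_nhds_zero_of_lt_one
    rw [ENNReal.ofReal_lt_one]
    exact Real.exp_lt_one_iff.2 (by norm_num)
  exact le_antisymm (ge_of_tendsto' hlim hbound) bot_le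

/-- The null set. -/
def NSet (W : ℕ → Finset ℕ) : Set (XSp W) := {z | ∃ᶠ n in atTop, z ∈ GSet W n (fun _ => false)}

lemma NSet_null (W : ℕ → Finset ℕ) : ((cm ℕ).prod (cm (TIx W))) (NSet W) = 0 := by
  classical
  have hN : NSet W = limsup (fun n => GSet W n (fun _ => false)) atTop := by
    ext z; rw [mem_limsup_iff_frequently_mem]; rfl
  have hNm : MeasurableSet (NSet W) := by
    rw [hN]
    exact MeasurableSet.measurableSet_limsup fun n => (GSet_clopen W n _).isOpen.measurableSet
  refine Measure.measure_prod_null_of_ae_null hNm (Filter.Eventually.of_forall fun a => ?_)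
  simp only [Pi.zero_apply]
  have hsec : Prod.mk a ⁻¹' NSet W =
      limsup (fun n => Prod.mk a ⁻¹' GSet W n (fun _ => false)) atTop := by
    ext T; rw [mem_limsup_iff_frequently_mem]; rfl
  rw [hsec]
  apply measure_limsup_atTop_eq_zero
  have hval : ∀ n, cm (TIx W) (Prod.mk a ⁻¹' GSet W n (fun _ => false)) = 2⁻¹ ^ n := by
    intro n
    let e : ℕ ↪ TIx W := ⟨fun i => (⟨n, fun w => xor (a w) false⟩, i), fun i j h => by
      simpa using h⟩
    have := cm_box ((Finset.range n).map e) (fun _ => false)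
    rw [Finset.card_map, Finset.card_range] at this
    rw [← this]
    congr 1
    ext T
    simp [GSet, e]
  simp only [hval]
  rw [ENNReal.tsum_geometric]
  simp [ENNReal.one_sub_inv_two]


/-- Localization by countably many slaloms. -/
lemma localize (W : ℕ → Finset ℕ) (Fam : Set (ℕ → Bool)) (hF : Cardinal.mk Fam < addTNull) :
    ∃ 𝒮 : Set (∀ n, Set (W n → Bool)), 𝒮.Countable ∧
      (∀ S ∈ 𝒮, ∀ᶠ n in atTop, (S n).ncard ≤ 2 ^ n) ∧
      ∀ a ∈ Fam, ∃ S ∈ 𝒮, ∀ᶠ n in atTop, (fun w : W n => a w) ∈ S n := by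
  classical
  obtain ⟨e⟩ : Nonempty (ℕ ≃ ℕ ⊕ TIx W) := nonempty_equiv_of_countable
  set ν : Measure (XSp W) := (cm ℕ).prod (cm (TIx W)) with hν
  have hN : IsNullCantor (Psi e '' NSet W) := by
    apply null_of_cm
    have hemb : MeasurableEmbedding (Psi e) :=
      ((Psi_cont e).isClosedEmbedding (Psi_inj e)).measurableEmbedding
    rw [← Psi_map e, hemb.map_apply, (Psi_inj e).preimage_image]
    exact NSet_null W
  let code : (ℕ → Bool) → (ℕ → Bool) := fun a => Psi e (a, fun _ => false)
  have hZ : IsNullCantor (Set.image2 xorAdd (code '' Fam) (Psi e '' NSet W)) := by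
    by_contra hcon
    have h1 : addTNull ≤ Cardinal.mk (code '' Fam) :=
      csInf_le' ⟨code '' Fam, ⟨_, hN, hcon⟩, rfl⟩
    exact absurd (h1.trans Cardinal.mk_image_le) (not_le.2 hF)
  obtain ⟨s, hs, hsum⟩ := hZ 2⁻¹ (by simp)
  set U : Set (XSp W) := Psi e ⁻¹' (⋃ n, cylSet (s n)) with hU
  have hUo : IsOpen U := (isOpen_iUnion fun n => cyl_open _).preimage (Psi_cont e)
  have hUm : ν U ≤ 2⁻¹ := by
    have : ν U = cm ℕ (⋃ n, cylSet (s n)) := by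
      rw [← Psi_map e, Measure.map_apply (Psi_cont e).measurable
        (isOpen_iUnion fun n => cyl_open _).measurableSet]
    rw [this]
    refine (measure_iUnion_le _).trans ?_
    simpa only [cm_cyl] using hsum
  have hKpos : ν Uᶜ ≠ 0 := by
    intro h0
    have h1 : ν Set.univ ≤ ν U + ν Uᶜ := by
      rw [← Set.union_compl_self U]; exact measure_union_le _ _
    rw [h0, add_zero, measure_univ] at h1
    have h2 := h1.trans hUm
    rw [ENNReal.one_le_inv] at h2
    norm_num at h2
  let ℬ := TopologicalSpace.countableBasis (XSp W)
  have hℬ : TopologicalSpace.IsTopologicalBasis ℬ := TopologicalSpace.isBasis_countableBasis _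
  have hℬc : ℬ.Countable := TopologicalSpace.countable_countableBasis _
  let R : Set (XSp W) := ⋃ V ∈ {V ∈ ℬ | ν (Uᶜ ∩ V) = 0}, V
  have hRo : IsOpen R := isOpen_biUnion fun V hV => hℬ.isOpen hV.1
  have hRn : ν (Uᶜ ∩ R) = 0 := by
    simp only [R, Set.inter_iUnion₂]
    rw [measure_biUnion_null_iff (hℬc.mono fun V hV => hV.1)]
    exact fun V hV => hV.2
  let K : Set (XSp W) := Uᶜ \ R
  have hKc : IsClosed K := hUo.isClosed_compl.sdiff hRo
  have hKV : ∀ V ∈ ℬ, (K ∩ V).Nonempty → ν (K ∩ V) ≠ 0 := by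
    rintro V hV ⟨z, ⟨hz1, hz2⟩, hz3⟩ h0
    apply hz2
    refine Set.mem_biUnion (x := V) ⟨hV, ?_⟩ hz3
    refine measure_mono_null (t := (K ∩ V) ∪ (Uᶜ ∩ R)) ?_ (measure_union_null h0 hRn)
    intro y hy
    by_cases hyR : y ∈ R
    · exact Or.inr ⟨hy.1, hyR⟩
    · exact Or.inl ⟨⟨hy.1, hyR⟩, hy.2⟩
  have hKne : K.Nonempty := by
    by_contra h
    rw [Set.not_nonempty_iff_eq_empty] at h
    apply hKpos
    refine measure_mono_null (t := Uᶜ ∩ R) ?_ hRn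
    intro y hy
    refine ⟨hy, ?_⟩
    by_contra hyR
    have : y ∈ K := ⟨hy, hyR⟩
    rw [h] at this
    exact this
  let SV : Set (XSp W) → ∀ n, Set (W n → Bool) :=
    fun V n => {t | ∀ z ∈ K ∩ V, z ∉ GSet W n t}
  refine ⟨SV '' {V ∈ ℬ | (K ∩ V).Nonempty}, (hℬc.mono fun V hV => hV.1).image _, ?_, ?_⟩
  · rintro _ ⟨V, ⟨hV, hne⟩, rfl⟩
    by_contra hcon
    rw [Filter.not_eventually] at hcon
    have h0 := DSet_null W (SV V) (hcon.mono fun n hn => not_le.1 hn)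
    refine hKV V hV hne (measure_mono_null ?_ h0)
    intro z hz n t ht
    exact ht z hz
  · intro a ha
    have hlim : ∀ z ∈ K, ∀ᶠ n in atTop, z ∉ GSet W n (fun w => a w) := by
      intro z hz
      by_contra hcon
      rw [Filter.not_eventually] at hcon
      apply hz.1
      apply hs
      let z' : XSp W := (fun i => xor (a i) (z.1 i), z.2)
      have hz' : z' ∈ NSet W := by
        refine hcon.mono fun n hn => ?_
        rw [not_not] at hn
        intro i hi
        have := hn i hi
        simp only [z', Bool.xor_false]
        simpa only [Bool.xor_comm] using this
      refine ⟨code a, ⟨a, ha, rfl⟩, Psi e z', ⟨z', hz', rfl⟩, ?_⟩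
      simp only [code]
      rw [Psi_xor]
      congr 1
      refine Prod.ext (funext fun i => ?_) (funext fun i => ?_)
      · simp [z']
      · simp [z']
    haveI : CompactSpace K := isCompact_iff_compactSpace.1 hKc.isCompact
    haveI : Nonempty K := hKne.to_subtype
    let C : ℕ → Set K := fun m => {z | ∀ n ≥ m, z.1 ∉ GSet W n (fun w => a w)}
    have hC : ∀ m, IsClosed (C m) := by
      intro m
      have : C m = ⋂ n ≥ m, Subtype.val ⁻¹' (GSet W n (fun w => a w))ᶜ := by
        ext z; simp [C]
      rw [this]
      exact isClosed_biInter fun n _ =>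
        (GSet_clopen W n _).compl.isClosed.preimage continuous_subtype_val
    have hCU : ⋃ m, C m = Set.univ := by
      rw [Set.eq_univ_iff_forall]
      intro z
      obtain ⟨m, hm⟩ := Filter.eventually_atTop.1 (hlim z.1 z.2)
      exact Set.mem_iUnion.2 ⟨m, hm⟩
    obtain ⟨m, z, hz⟩ := nonempty_interior_of_iUnion_of_closed hC hCU
    obtain ⟨O, hO, hOeq⟩ := isOpen_induced_iff.1 (isOpen_interior (s := C m))
    have hzO : z.1 ∈ O := by
      have : z ∈ Subtype.val ⁻¹' O := hOeq ▸ hz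
      exact this
    obtain ⟨V, hV, hzV, hVO⟩ := hℬ.exists_subset_of_mem_open hzO hO
    refine ⟨SV V, ⟨V, ⟨hV, z.1, z.2, hzV⟩, rfl⟩, ?_⟩
    filter_upwards [Filter.eventually_ge_atTop m] with n hn
    intro y hy
    have hyC : (⟨y, hy.1⟩ : K) ∈ C m := by
      apply interior_subset
      rw [← hOeq]
      exact hVO hy.2
    exact hyC n hn


lemma stmt8_aux (I : Set (Set ℕ)) (hGF : GraduallyFragmented I)
    (𝒜 : Set (Set ℕ)) (h𝒜 : 𝒜 ⊆ I) (hcard : Cardinal.mk 𝒜 < addTNull) :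
    ∃ B : ℕ → Set ℕ, (∀ n, B n ∈ I) ∧ ∀ A ∈ 𝒜, ∃ n, AlSub A (B n) := by
  classical
  obtain ⟨P, φ, f, hPf, -, hPd, hPU, hφ, hI, hgrad⟩ := hGF
  have hjx : ∀ x : ℕ, ∃ j, x ∈ P j := fun x => by
    have : x ∈ ⋃ n, P n := by rw [hPU]; trivial
    exact Set.mem_iUnion.1 this
  choose jx hjx using hjx
  have hju : ∀ x j, x ∈ P j → jx x = j := by
    intro x j hx
    by_contra hne
    exact Set.disjoint_left.1 (hPd _ _ hne) (hjx x) hx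
  let Q : ℕ → ℕ → Prop := fun n j => ∀ k ≤ n, ∀ ℬ : Finset (Set ℕ), ℬ.card ≤ 2 ^ n →
      (∀ B ∈ ℬ, B ⊆ P j) → (∀ B ∈ ℬ, φ j B ≤ (k : ℝ≥0∞)) →
      φ j (⋃ B ∈ ℬ, B) ≤ ((f k : ℕ) : ℝ≥0∞)
  have hQ : ∀ n, ∀ᶠ j in atTop, Q n j := by
    intro n
    have := (Filter.eventually_all_finite (Set.finite_Iic n)).2 fun k _ => hgrad k (2 ^ n)
    exact this
  let g : ℕ → ℕ := fun j => Nat.findGreatest (fun n => Q n j) j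
  have hg : ∀ n, {j | g j < n}.Finite := by
    intro n
    have h1 : ∀ᶠ j in atTop, ¬ g j < n := by
      filter_upwards [hQ n, Filter.eventually_ge_atTop n] with j h1 h2
      exact not_lt.2 (Nat.le_findGreatest h2 h1)
    rw [← Nat.cofinite_eq_atTop, Filter.eventually_cofinite] at h1
    simpa only [not_not] using h1
  have hgQ : ∀ j, 1 ≤ g j → Q (g j) j := fun j hj =>
    Nat.findGreatest_of_ne_zero (P := fun n => Q n j) (n := j) rfl (by omega)
  have hWf : ∀ n, {x | g (jx x) < n}.Finite := by
    intro n
    refine ((hg n).biUnion fun j _ => hPf j).subset fun x hx => ?_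
    exact Set.mem_biUnion (x := jx x) hx (hjx x)
  have hWf' : ∀ n, {x | g (jx x) = n}.Finite := fun n =>
    (hWf (n + 1)).subset fun x hx => by
      have : g (jx x) = n := hx
      change g (jx x) < n + 1
      omega
  let W : ℕ → Finset ℕ := fun n => (hWf' n).toFinset
  have hW : ∀ n x, x ∈ W n ↔ g (jx x) = n := fun n x => by simp [W]
  obtain ⟨𝒮, h𝒮c, h𝒮, hloc⟩ := localize W (chiSet '' 𝒜) (Cardinal.mk_image_le.trans_lt hcard)
  let supp : ∀ n, (W n → Bool) → Set ℕ := fun n s => {y | ∃ h : y ∈ W n, s ⟨y, h⟩ = true}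
  let BB : (∀ n, Set (W n → Bool)) → ℕ → Set ℕ := fun S k =>
    {x | 1 ≤ g (jx x) ∧ k ≤ g (jx x) ∧ (S (g (jx x))).ncard ≤ 2 ^ (g (jx x)) ∧
      ∃ s ∈ S (g (jx x)), φ (jx x) (supp _ s ∩ P (jx x)) ≤ (k : ℝ≥0∞) ∧ x ∈ supp _ s}
  have hBB : ∀ S k, BB S k ∈ I := by
    intro S k
    rw [hI]
    refine lt_of_le_of_lt (iSup_le (a := ((f k : ℕ) : ℝ≥0∞)) fun j => ?_)
      (ENNReal.natCast_lt_top _)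
    by_cases hc : 1 ≤ g j ∧ k ≤ g j ∧ (S (g j)).ncard ≤ 2 ^ (g j)
    · obtain ⟨h1, h2, h3⟩ := hc
      let ℬ : Finset (Set ℕ) :=
        ((S (g j)).toFinset.filter fun s => φ j (supp _ s ∩ P j) ≤ (k : ℝ≥0∞)).image
          fun s => supp _ s ∩ P j
      have hcardB : ℬ.card ≤ 2 ^ (g j) := by
        refine Finset.card_image_le.trans ((Finset.card_filter_le _ _).trans ?_)
        rw [← Set.ncard_eq_toFinset_card']
        exact h3
      refine le_trans ((hφ j).2.1 _ _ ?_) (hgQ j h1 k h2 ℬ hcardB ?_ ?_)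
      · rintro x ⟨hx, hxj⟩
        have hj := hju x j hxj
        obtain ⟨-, -, -, s, hs, hs1, hs2⟩ := hx
        subst hj
        refine Set.mem_biUnion (x := supp _ s ∩ P (jx x)) ?_ ⟨hs2, hxj⟩
        simp only [ℬ, Finset.coe_image]
        refine ⟨s, ?_, rfl⟩
        simp only [Finset.coe_filter, Set.mem_toFinset]
        exact ⟨hs, hs1⟩
      · intro B hB
        simp only [ℬ, Finset.mem_image] at hB
        obtain ⟨s, -, rfl⟩ := hB
        exact Set.inter_subset_right
      · intro B hB
        simp only [ℬ, Finset.mem_image, Finset.mem_filter] at hB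
        obtain ⟨s, ⟨-, hs⟩, rfl⟩ := hB
        exact hs
    · have : BB S k ∩ P j = ∅ := by
        rw [Set.eq_empty_iff_forall_notMem]
        rintro x ⟨hx, hxj⟩
        have hj := hju x j hxj
        subst hj
        exact hc ⟨hx.1, hx.2.1, hx.2.2.1⟩
      rw [this, (hφ j).1]
      exact bot_le
  let 𝒞 : Set (Set ℕ) := insert ∅ (⋃ S ∈ 𝒮, Set.range (BB S))
  have h𝒞 : 𝒞.Countable := (h𝒮c.biUnion fun S _ => Set.countable_range _).insert _
  obtain ⟨B, hB⟩ := h𝒞.exists_eq_range ⟨∅, Set.mem_insert _ _⟩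
  refine ⟨B, ?_, ?_⟩
  · intro n
    have : B n ∈ 𝒞 := hB ▸ Set.mem_range_self n
    rcases this with h | h
    · rw [h, hI]
      simp [(hφ _).1]
    · simp only [Set.mem_iUnion] at h
      obtain ⟨S, -, k, hk⟩ := h
      rw [← hk]
      exact hBB S k
  · intro A hA
    obtain ⟨k, hk⟩ := ENNReal.exists_nat_gt ((hI A).1 (h𝒜 hA)).ne
    obtain ⟨S, hS, hAS⟩ := hloc (chiSet A) ⟨A, hA, rfl⟩
    have hmem : BB S k ∈ 𝒞 := Or.inr (Set.mem_biUnion hS ⟨k, rfl⟩)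
    rw [hB] at hmem
    obtain ⟨n, hn⟩ := hmem
    refine ⟨n, ?_⟩
    rw [hn]
    obtain ⟨m, hm⟩ := Filter.eventually_atTop.1 (hAS.and (h𝒮 S hS))
    refine (hWf (max m (max 1 k))).subset fun x hx => ?_
    by_contra hlt
    have hge : max m (max 1 k) ≤ g (jx x) := not_lt.1 hlt
    have hgm : m ≤ g (jx x) := (le_max_left _ _).trans hge
    have hg1 : 1 ≤ g (jx x) := (le_max_left _ _).trans ((le_max_right _ _).trans hge)
    have hgk : k ≤ g (jx x) := (le_max_right _ _).trans ((le_max_right _ _).trans hge)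
    apply hx.2
    refine ⟨hg1, hgk, (hm _ hgm).2, _, (hm _ hgm).1, ?_, ?_⟩
    · refine le_trans ((hφ _).2.1 _ (A ∩ P (jx x)) ?_)
        ((le_iSup (fun n => φ n (A ∩ P n)) (jx x)).trans hk.le)
      rintro y ⟨⟨_, hy⟩, hyP⟩
      refine ⟨?_, hyP⟩
      simpa [chiSet] using hy
    · refine ⟨(hW _ _).2 rfl, ?_⟩
      simpa [chiSet] using hx.1


/-- For every gradually fragmented ideal `I` on `ω`,
`add*_ω(I) ≥ add_t(𝒩)`: every witnessing family for `add*_ω(I)` has size at least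
`add_t(𝒩)` (this renders the inequality correctly also when `add*_ω(I) = ∞`). -/
theorem stmt8 (I : Set (Set ℕ)) (hI : IsIdealOn I) (hGF : GraduallyFragmented I) :
    ∀ c ∈ addStarOmegaFam I, addTNull ≤ c := by
  rintro c ⟨𝒜, h𝒜, hB, rfl⟩
  by_contra hlt
  obtain ⟨B, hBI, hAB⟩ := stmt8_aux I hGF 𝒜 h𝒜 (not_le.1 hlt)
  obtain ⟨A, hA, hAn⟩ := hB B hBI
  obtain ⟨n, hn⟩ := hAB A hA
  exact hAn n hn


end
end

section
/- non*_ω(𝒮) = cov_ω(𝒩), where 𝒮 is the Solecki ideal: the least cardinality of a family 𝒜 of infinite subsets of Ω such that every countable subfamily of 𝒮 is almost avoided by a single member of 𝒜 equals the least cardinality of a family of null sets of reals such that every countable set of reals is contained in one of them. -/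
open Cardinal Filter Set
open scoped ENNReal

noncomputable section

/-! ### Fair coin measure on `2^ω` -/

open MeasureTheory in
/-- The fair coin on `Bool`. -/
def coinM : Measure Bool := (2⁻¹ : ℝ≥0∞) • (Measure.dirac true + Measure.dirac false)

open MeasureTheory in
instance coinM_prob : IsProbabilityMeasure coinM := by
  constructor
  simp only [coinM, Measure.smul_apply, Measure.add_apply, measure_univ, smul_eq_mul]
  rw [one_add_one_eq_two]
  exact ENNReal.inv_mul_cancel (by simp) (by simp)

lemma coinM_singleton (b : Bool) : coinM {b} = 2⁻¹ := by
  cases b <;> simp [coinM]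

open MeasureTheory in
/-- The coin-flipping measure. -/
def muC : Measure (ℕ → Bool) := Measure.infinitePi (fun _ => coinM)

open MeasureTheory in
instance muC_prob : IsProbabilityMeasure muC := by
  unfold muC; infer_instance

/-- Cylinder of level `n`. -/
def cylN (n : ℕ) (s : Fin n → Bool) : Set (ℕ → Bool) := {x | ∀ i : Fin n, x i = s i}

lemma extendFalse_apply {n : ℕ} (s : Fin n → Bool) (i : Fin n) : extendFalse s i = s i := by
  simp [extendFalse]

lemma cylN_eq_pi (n : ℕ) (s : Fin n → Bool) :
    cylN n s = Set.pi (Finset.range n : Finset ℕ) (fun i => {extendFalse s i}) := by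
  ext x
  simp only [cylN, mem_ofPred_eq, Set.mem_pi, Finset.coe_range, mem_Iio, mem_singleton_iff]
  constructor
  · intro h i hi
    rw [h ⟨i, hi⟩, ← extendFalse_apply s ⟨i, hi⟩]
  · intro h i
    rw [h i i.2, extendFalse_apply]

lemma muC_cylN (n : ℕ) (s : Fin n → Bool) : muC (cylN n s) = (2⁻¹ : ℝ≥0∞) ^ n := by
  rw [cylN_eq_pi, muC, MeasureTheory.Measure.infinitePi_pi]
  · simp [coinM_singleton]
  · intro i _
    exact MeasurableSet.singleton _

lemma cylN_measurable (n : ℕ) (s : Fin n → Bool) : MeasurableSet (cylN n s) := by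
  rw [cylN_eq_pi]
  exact MeasurableSet.pi (Finset.countable_toSet _) (fun i _ => MeasurableSet.singleton _)

lemma det_iff {D : Set (ℕ → Bool)} {n : ℕ} (hD : DeterminedBy D n) (x : ℕ → Bool) :
    x ∈ D ↔ extendFalse (fun i : Fin n => x i) ∈ D := by
  apply hD
  intro i hi
  simp [extendFalse, hi]

open Classical in
lemma det_eq_iUnion {D : Set (ℕ → Bool)} {n : ℕ} (hD : DeterminedBy D n) :
    D = ⋃ s ∈ (Finset.univ.filter fun s : Fin n → Bool => extendFalse s ∈ D), cylN n s := by
  ext x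
  simp only [Finset.mem_filter, Finset.mem_univ, true_and, mem_iUnion, exists_prop]
  constructor
  · intro hx
    exact ⟨fun i => x i, (det_iff hD x).1 hx, fun i => rfl⟩
  · rintro ⟨s, hs, hx⟩
    rw [det_iff hD]
    have : (fun i : Fin n => x i) = s := funext hx
    rwa [this]

open Classical in
lemma det_measure_sum {D : Set (ℕ → Bool)} {n : ℕ} (hD : DeterminedBy D n)
    (ν : MeasureTheory.Measure (ℕ → Bool)) :
    ν D = ∑ s ∈ (Finset.univ.filter fun s : Fin n → Bool => extendFalse s ∈ D),
      ν (cylN n s) := by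
  conv_lhs => rw [det_eq_iUnion hD]
  apply MeasureTheory.measure_biUnion_finset
  · intro s _ t _ hst
    rw [Function.onFun, Set.disjoint_left]
    intro x hx hx'
    exact hst (funext fun i => (hx i).symm.trans (hx' i))
  · intro s _
    exact cylN_measurable n s

lemma det_measurable {D : Set (ℕ → Bool)} {n : ℕ} (hD : DeterminedBy D n) :
    MeasurableSet D := by
  classical
  rw [det_eq_iUnion hD]
  exact Finset.measurableSet_biUnion _ (fun s _ => cylN_measurable n s)

open Classical in
lemma det_muC {D : Set (ℕ → Bool)} {n : ℕ} (hD : DeterminedBy D n) :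
    muC D = ((Finset.univ.filter fun s : Fin n → Bool => extendFalse s ∈ D).card : ℝ≥0∞)
      * (2⁻¹ : ℝ≥0∞) ^ n := by
  rw [det_measure_sum hD]
  simp [muC_cylN]

lemma half_muC {C : Set (ℕ → Bool)} (hC : HalfMeasure C) : muC C = 2⁻¹ := by
  classical
  obtain ⟨n, hD, hc⟩ := hC
  rw [det_muC hD]
  rw [Nat.card_eq_fintype_card, Fintype.card_subtype] at hc
  set c := (Finset.univ.filter fun s : Fin n → Bool => extendFalse s ∈ C).card
  have h2 : (2 : ℝ≥0∞) * c = 2 ^ n := by exact_mod_cast hc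
  have h3 : (c : ℝ≥0∞) = 2⁻¹ * 2 ^ n := by
    rw [← h2, ← mul_assoc, ENNReal.inv_mul_cancel (by simp) (by simp), one_mul]
  rw [h3, mul_assoc, ← mul_pow, ENNReal.mul_inv_cancel (by simp) (by simp), one_pow, mul_one]

lemma det_clopen {D : Set (ℕ → Bool)} {n : ℕ} (hD : DeterminedBy D n) : IsClopenCantor D := by
  have h : D = (fun (x : ℕ → Bool) (i : Fin n) => x i) ⁻¹' {s | extendFalse s ∈ D} := by
    ext x
    exact det_iff hD x
  unfold IsClopenCantor
  rw [h]
  exact (isClopen_discrete _).preimage (by fun_prop)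

/-- The part of `U` seen at level `n`. -/
def levU (U : Set (ℕ → Bool)) (n : ℕ) : Set (ℕ → Bool) :=
  {x | ∀ y : ℕ → Bool, (∀ i < n, y i = x i) → y ∈ U}

lemma levU_det (U : Set (ℕ → Bool)) (n : ℕ) : DeterminedBy (levU U n) n := by
  intro x y h
  constructor
  · intro hx z hz
    exact hx z (fun i hi => (hz i hi).trans (h i hi).symm)
  · intro hx z hz
    exact hx z (fun i hi => (hz i hi).trans (h i hi))

lemma levU_subset (U : Set (ℕ → Bool)) (n : ℕ) : levU U n ⊆ U := fun x hx => hx x (fun _ _ => rfl)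

lemma levU_mono {U V : Set (ℕ → Bool)} (h : U ⊆ V) (n : ℕ) : levU U n ⊆ levU V n :=
  fun _ hx y hy => h (hx y hy)

lemma levU_le (U : Set (ℕ → Bool)) {n m : ℕ} (h : n ≤ m) : levU U n ⊆ levU U m :=
  fun _ hx y hy => hx y (fun i hi => hy i (hi.trans_le h))

lemma exists_levU {U : Set (ℕ → Bool)} (hU : IsOpen U) {x : ℕ → Bool} (hx : x ∈ U) :
    ∃ n, x ∈ levU U n := by
  obtain ⟨I, u, hu, hsub⟩ := isOpen_pi_iff.1 hU x hx
  refine ⟨I.sup id + 1, fun y hy => hsub ?_⟩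
  intro i hi
  have : i ≤ I.sup id := Finset.le_sup (f := id) hi
  rw [hy i (by omega)]
  exact (hu i hi).2

lemma exists_half {U : Set (ℕ → Bool)} (hU : muC U < 2⁻¹) (k : ℕ) :
    ∃ C : Set (ℕ → Bool), DeterminedBy C (k + 1) ∧ HalfMeasure C ∧ Disjoint C (levU U (k + 1)) := by
  classical
  have hlt : muC (levU U (k + 1)) < 2⁻¹ :=
    (MeasureTheory.measure_mono (levU_subset U _)).trans_lt hU
  rw [det_muC (levU_det U _)] at hlt
  set S := (Finset.univ.filter fun s : Fin (k + 1) → Bool => extendFalse s ∈ levU U (k + 1)) with hS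
  have hcard : S.card < 2 ^ k := by
    by_contra hge
    push Not at hge
    apply absurd hlt
    rw [not_lt]
    have h1 : ((2 : ℝ≥0∞) ^ k) ≤ (S.card : ℝ≥0∞) := by exact_mod_cast hge
    calc (2⁻¹ : ℝ≥0∞) = (2 * 2⁻¹) ^ k * 2⁻¹ := by
          rw [ENNReal.mul_inv_cancel (by simp) (by simp), one_pow, one_mul]
      _ = 2 ^ k * (2⁻¹) ^ (k + 1) := by rw [mul_pow, pow_succ, mul_assoc]
      _ ≤ _ := by gcongr
  have hSc : 2 ^ k ≤ (Sᶜ).card := by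
    rw [Finset.card_compl]
    simp only [Fintype.card_pi, Fintype.card_bool, Finset.prod_const, Finset.card_univ,
      Fintype.card_fin, pow_succ]
    omega
  obtain ⟨T, hTS, hT⟩ := Finset.exists_subset_card_eq hSc
  have hmem : ∀ s : Fin (k + 1) → Bool, (fun i : Fin (k + 1) => extendFalse s i) = s :=
    fun s => funext fun i => extendFalse_apply s i
  have hdet : DeterminedBy {x : ℕ → Bool | (fun i : Fin (k + 1) => x i) ∈ T} (k + 1) := by
    intro x y h
    have : (fun i : Fin (k + 1) => x i) = (fun i : Fin (k + 1) => y i) :=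
      funext fun i => h i i.2
    simp only [mem_ofPred_eq, this]
  refine ⟨{x | (fun i : Fin (k + 1) => x i) ∈ T}, hdet, ⟨k + 1, hdet, ?_⟩, ?_⟩
  · rw [Nat.card_eq_fintype_card, Fintype.card_subtype]
    have : (Finset.univ.filter fun s : Fin (k + 1) → Bool =>
        extendFalse s ∈ {x : ℕ → Bool | (fun i : Fin (k + 1) => x i) ∈ T}) = T := by
      ext s
      simp [hmem]
    rw [this, hT, pow_succ, mul_comm]
  · rw [Set.disjoint_left]
    intro x hx hx'
    have h1 := hTS hx
    rw [Finset.mem_compl] at h1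
    apply h1
    rw [hS, Finset.mem_filter]
    exact ⟨Finset.mem_univ _, (det_iff (levU_det U _) x).1 hx'⟩

lemma det_finite (n : ℕ) : {D : Set (ℕ → Bool) | DeterminedBy D n}.Finite := by
  apply Set.Finite.of_injOn (f := fun D : Set (ℕ → Bool) => {s : Fin n → Bool | extendFalse s ∈ D})
    (t := Set.univ) (fun _ _ => mem_univ _) _ Set.finite_univ
  intro D hD E hE h
  ext x
  rw [det_iff hD, det_iff hE]
  exact Set.ext_iff.1 h _

/-- Every null set is almost avoided by an infinite set of half-measure clopen sets. -/
lemma null_avoid {N : Set (ℕ → Bool)} (hN : muC N = 0) :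
    ∃ A : Set SoleckiBase, A.Infinite ∧ ∀ x ∈ N, (A ∩ {C : SoleckiBase | x ∈ C.val}).Finite := by
  obtain ⟨U, hNU, hUo, hU⟩ := Set.exists_isOpen_lt_of_lt (μ := muC) N 2⁻¹ (by simp [hN])
  refine ⟨{C | ∃ n, DeterminedBy C.val n ∧ Disjoint C.val (levU U n)}, ?_, ?_⟩
  · intro hfin
    have hne : ∀ C : SoleckiBase, C.val.Nonempty := by
      intro C
      rw [Set.nonempty_iff_ne_empty]
      intro h
      have := half_muC C.2.2
      rw [h, MeasureTheory.measure_empty] at this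
      exact absurd this.symm (ENNReal.inv_ne_zero.2 (by simp))
    choose p hp using hne
    set P := p '' {C | ∃ n, DeterminedBy C.val n ∧ Disjoint C.val (levU U n)} with hPdef
    have hPf : P.Finite := hfin.image p
    have hP0 : muC (U ∪ P) < 2⁻¹ := by
      have hna : muC P = 0 := by
        rw [← Set.biUnion_of_singleton P]
        rw [MeasureTheory.measure_biUnion_null_iff hPf.countable]
        intro x _
        apply le_antisymm _ zero_le
        refine ge_of_tendsto' (ENNReal.tendsto_pow_atTop_nhds_zero_of_lt_one
          (r := 2⁻¹) (by simp)) (fun n => ?_)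
        rw [← muC_cylN n (fun i => x i)]
        apply MeasureTheory.measure_mono
        rintro y rfl i
        rfl
      calc muC (U ∪ P) ≤ muC U + muC P := MeasureTheory.measure_union_le _ _
        _ < 2⁻¹ := by rw [hna, add_zero]; exact hU
    obtain ⟨V, hPV, hVo, hV⟩ := Set.exists_isOpen_lt_of_lt (μ := muC) _ _ hP0
    have hk : ∃ k, P ⊆ levU V k := by
      have h1 : ∀ x ∈ P, ∀ᶠ k in atTop, x ∈ levU V k := by
        intro x hx
        obtain ⟨n, hn⟩ := exists_levU hVo (hPV (Or.inr hx))
        filter_upwards [eventually_ge_atTop n] with m hm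
        exact levU_le V hm hn
      exact ((Filter.eventually_all_finite hPf).2 h1).exists
    obtain ⟨k, hk⟩ := hk
    obtain ⟨C, hCd, hCh, hCdis⟩ := exists_half hV k
    let C' : SoleckiBase := ⟨C, det_clopen hCd, hCh⟩
    have hmem : p C' ∈ P := by
      refine ⟨C', ⟨k + 1, hCd, ?_⟩, rfl⟩
      exact hCdis.mono_right (levU_mono (subset_union_left.trans hPV) _)
    exact Set.disjoint_left.1 hCdis (hp C') (levU_le V (Nat.le_succ k) (hk hmem))
  · intro x hx
    obtain ⟨n, hn⟩ := exists_levU hUo (hNU hx)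
    have hf : (⋃ m ∈ Finset.range n, {D : Set (ℕ → Bool) | DeterminedBy D m}).Finite :=
      Set.Finite.biUnion (Finset.finite_toSet _) (fun m _ => det_finite m)
    refine Set.Finite.subset (hf.preimage (Subtype.val_injective.injOn)) ?_
    rintro C ⟨⟨m, hm, hd⟩, hxC⟩
    simp only [mem_preimage, mem_iUnion, Finset.mem_range, exists_prop]
    refine ⟨m, ?_, hm⟩
    by_contra hge
    exact Set.disjoint_left.1 hd hxC (levU_le U (not_lt.1 hge) hn)

/-! ### Binary digits -/

/-- Binary digits of a real. -/
def digB (x : ℝ) : ℕ → Bool := fun i => decide (Real.digits x 2 i = 1)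

/-- Real number with given binary digits. -/
def ofB (y : ℕ → Bool) : ℝ := Real.ofDigits (fun i => if y i then (1 : Fin 2) else 0)

lemma ofB_digB {x : ℝ} (hx : x ∈ Set.Ico (0 : ℝ) 1) : ofB (digB x) = x := by
  conv_rhs => rw [← Real.ofDigits_digits (b := 2) (by norm_num) hx]
  unfold ofB digB
  congr 1
  funext i
  generalize Real.digits x 2 i = d
  fin_cases d <;> simp

lemma ofB_measurable : Measurable ofB := by
  apply Real.continuous_ofDigits.measurable.comp
  exact measurable_pi_lambda _ fun i =>
    (measurable_of_countable (fun b : Bool => if b then (1 : Fin 2) else 0)).comp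
      (measurable_pi_apply i)

lemma digB_measurable : Measurable digB := by
  refine measurable_pi_lambda _ fun i => ?_
  exact (measurable_of_countable (fun k : ℕ => decide (Fin.ofNat 2 k = 1))).comp
    (Nat.measurable_floor.comp (by fun_prop))

lemma digB_law : (MeasureTheory.volume.restrict (Set.Ico (0 : ℝ) 1)).map digB = muC := by
  set ν := (MeasureTheory.volume.restrict (Set.Ico (0 : ℝ) 1)).map digB with hν
  have hprob : MeasureTheory.IsProbabilityMeasure ν := by
    constructor
    rw [hν, MeasureTheory.Measure.map_apply digB_measurable MeasurableSet.univ]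
    simp
  have hcyl : ∀ n (s : Fin n → Bool), ν (cylN n s) ≤ muC (cylN n s) := by
    intro n s
    rw [muC_cylN, hν, MeasureTheory.Measure.map_apply digB_measurable (cylN_measurable n s),
      MeasureTheory.Measure.restrict_apply (digB_measurable (cylN_measurable n s))]
    refine (Real.volume_le_diam _).trans ?_
    apply Metric.ediam_le
    rintro x ⟨hx, hx1⟩ y ⟨hy, hy1⟩
    rw [edist_dist, Real.dist_eq]
    conv_lhs => rw [← ofB_digB hx1, ← ofB_digB hy1]
    have h := Real.abs_ofDigits_sub_ofDigits_le (b := 2) (n := n)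
      (x := fun i => if digB x i then (1 : Fin 2) else 0)
      (y := fun i => if digB y i then (1 : Fin 2) else 0) (fun i hi => by
        have h1 : digB x i = s ⟨i, hi⟩ := hx ⟨i, hi⟩
        have h2 : digB y i = s ⟨i, hi⟩ := hy ⟨i, hi⟩
        simp only [h1, h2])
    refine (ENNReal.ofReal_le_ofReal h).trans ?_
    rw [ENNReal.ofReal_inv_of_pos (by positivity)]
    rw [ENNReal.ofReal_pow (by positivity)]
    simp [ENNReal.inv_pow]
  have hdet : ∀ n (D : Set (ℕ → Bool)), DeterminedBy D n → ν D ≤ muC D := by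
    intro n D hD
    classical
    rw [det_measure_sum hD, det_measure_sum hD muC]
    exact Finset.sum_le_sum fun s _ => hcyl n s
  have heq : ∀ n (D : Set (ℕ → Bool)), DeterminedBy D n → ν D = muC D := by
    intro n D hD
    refine le_antisymm (hdet n D hD) ?_
    have hDc : DeterminedBy Dᶜ n := fun x y h => not_congr (hD x y h)
    have h1 := hdet n _ hDc
    rw [MeasureTheory.prob_compl_eq_one_sub (det_measurable hD),
      MeasureTheory.prob_compl_eq_one_sub (det_measurable hD)] at h1
    rwa [ENNReal.sub_le_sub_iff_left MeasureTheory.prob_le_one (by simp)] at h1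
  apply MeasureTheory.Measure.eq_infinitePi
  intro s t ht
  rw [← MeasureTheory.Measure.infinitePi_pi (μ := fun _ : ℕ => coinM) (fun i _ => ht i)]
  apply heq (s.sup id + 1)
  intro x y h
  simp only [Set.mem_pi]
  refine forall₂_congr fun i hi => ?_
  have : i ≤ s.sup id := Finset.le_sup (f := id) hi
  rw [h i (by omega)]

lemma ofB_null {N : Set ℝ} (hN : MeasureTheory.volume N = 0) : muC (ofB ⁻¹' N) = 0 := by
  set N' := MeasureTheory.toMeasurable MeasureTheory.volume N
  have hN' : MeasureTheory.volume N' = 0 := by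
    rw [MeasureTheory.measure_toMeasurable, hN]
  have hm : MeasurableSet N' := MeasureTheory.measurableSet_toMeasurable _ _
  refine MeasureTheory.measure_mono_null
    (preimage_mono (MeasureTheory.subset_toMeasurable MeasureTheory.volume N)) ?_
  change muC (ofB ⁻¹' N') = 0
  rw [← digB_law, MeasureTheory.Measure.map_apply digB_measurable (ofB_measurable hm),
    MeasureTheory.Measure.restrict_apply (digB_measurable (ofB_measurable hm))]
  refine MeasureTheory.measure_mono_null ?_ hN'
  rintro x ⟨hx, hx1⟩
  have : ofB (digB x) ∈ N' := hx
  rwa [ofB_digB hx1] at this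

/-! ### The two inequalities -/

lemma non_of_cov {𝒜 : Set (Set ℝ)} (h0 : ∀ N ∈ 𝒜, MeasureTheory.volume N = 0)
    (hc : ∀ B : Set ℝ, B.Countable → ∃ N ∈ 𝒜, B ⊆ N) :
    ∃ c ∈ nonStarOmegaFam SoleckiIdeal, c ≤ Cardinal.mk 𝒜 := by
  choose! F hFi hF using fun (N : Set ℝ) (hN : N ∈ 𝒜) => null_avoid (ofB_null (h0 N hN))
  refine ⟨Cardinal.mk (F '' 𝒜), ⟨F '' 𝒜, ?_, ?_, rfl⟩, Cardinal.mk_image_le⟩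
  · rintro _ ⟨N, hN, rfl⟩
    exact hFi N hN
  · intro B hB
    choose G hG using hB
    obtain ⟨N, hN, hsub⟩ := hc (ofB '' ⋃ n, (G n : Set (ℕ → Bool)))
      ((Set.countable_iUnion fun n => (G n).countable_toSet).image _)
    refine ⟨F N, mem_image_of_mem F hN, fun n => ?_⟩
    have hfin : (⋃ y ∈ G n, (F N ∩ {C : SoleckiBase | y ∈ C.val})).Finite := by
      refine Set.Finite.biUnion (G n).finite_toSet (fun y hy => hF N hN y ?_)
      exact hsub (mem_image_of_mem _ (mem_iUnion.2 ⟨n, hy⟩))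
    refine hfin.subset ?_
    rintro C ⟨hC, hCB⟩
    have := hG n hCB
    simp only [mem_iUnion, exists_prop] at this ⊢
    obtain ⟨y, hy, hyC⟩ := this
    exact ⟨y, hy, hC, hyC⟩

lemma liminf_le_half (C : ℕ → SoleckiBase) :
    MeasurableSet {y : ℕ → Bool | ∃ n, ∀ k ≥ n, y ∉ (C k).val} ∧
      muC {y : ℕ → Bool | ∃ n, ∀ k ≥ n, y ∉ (C k).val} ≤ 2⁻¹ := by
  have hm : ∀ k, MeasurableSet (C k).val := fun k => by
    obtain ⟨n, hn, _⟩ := (C k).2.2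
    exact det_measurable hn
  have he : {y : ℕ → Bool | ∃ n, ∀ k ≥ n, y ∉ (C k).val}
      = ⋃ n, ⋂ k ≥ n, ((C k).val)ᶜ := by
    ext y; simp
  rw [he]
  constructor
  · exact MeasurableSet.iUnion fun n => MeasurableSet.iInter fun k =>
      MeasurableSet.iInter fun _ => (hm k).compl
  · rw [Monotone.measure_iUnion]
    · refine iSup_le fun n => ?_
      calc muC (⋂ k ≥ n, ((C k).val)ᶜ) ≤ muC ((C n).val)ᶜ :=
            MeasureTheory.measure_mono (biInter_subset_of_mem (le_refl n))
        _ = 2⁻¹ := by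
            rw [MeasureTheory.prob_compl_eq_one_sub (hm n), half_muC (C n).2.2,
              ENNReal.one_sub_inv_two]
    · intro n m hnm y hy
      simp only [mem_iInter] at hy ⊢
      exact fun k hk => hy k (le_trans hnm hk)

lemma pi_null {L : Set (ℕ → Bool)} (hm : MeasurableSet L) (hL : muC L ≤ 2⁻¹) :
    MeasureTheory.Measure.infinitePi (fun _ : ℕ => muC) {z : ℕ → ℕ → Bool | ∀ i, z i ∈ L} = 0 := by
  apply le_antisymm _ zero_le
  refine ge_of_tendsto' (ENNReal.tendsto_pow_atTop_nhds_zero_of_lt_one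
    (r := 2⁻¹) (by simp)) (fun n => ?_)
  calc _ ≤ MeasureTheory.Measure.infinitePi (fun _ : ℕ => muC)
          (Set.pi (Finset.range n : Finset ℕ) (fun _ => L)) :=
        MeasureTheory.measure_mono (fun z (hz : ∀ i, z i ∈ L) i _ => hz i)
    _ = (muC L) ^ n := by
        rw [MeasureTheory.Measure.infinitePi_pi _ (fun _ _ => hm)]; simp
    _ ≤ _ := by gcongr

lemma cov_of_non {𝒜 : Set (Set SoleckiBase)} (hi : ∀ A ∈ 𝒜, A.Infinite)
    (hc : ∀ B : ℕ → Set SoleckiBase, (∀ n, B n ∈ SoleckiIdeal) →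
      ∃ A ∈ 𝒜, ∀ n, (A ∩ B n).Finite) :
    ∃ 𝒩 : Set (Set ℝ), (∀ N ∈ 𝒩, MeasureTheory.volume N = 0) ∧
      (∀ B : Set ℝ, B.Countable → ∃ N ∈ 𝒩, B ⊆ N) ∧ Cardinal.mk 𝒩 ≤ Cardinal.mk 𝒜 := by
  obtain ⟨f, hf, hlaw⟩ := MeasureTheory.Measure.exists_measurable_map_eq
    (MeasureTheory.Measure.infinitePi (fun _ : ℕ => muC))
  -- each `A` yields a null set of reals
  have key : ∀ A ∈ 𝒜, ∃ N : Set ℝ, MeasureTheory.volume N = 0 ∧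
      ∀ (r : ℝ) (n : ℤ) (u : unitInterval), r - n = u →
        (∀ i, (A ∩ {C : SoleckiBase | f u i ∈ C.val}).Finite) → r ∈ N := by
    intro A hA
    let e := (hi A hA).natEmbedding
    let C : ℕ → SoleckiBase := fun k => (e k).val
    have hCinj : Function.Injective C := Subtype.val_injective.comp e.injective
    obtain ⟨hLm, hL⟩ := liminf_le_half C
    set L := {y : ℕ → Bool | ∃ n, ∀ k ≥ n, y ∉ (C k).val} with hLdef
    have hMm : MeasurableSet {z : ℕ → ℕ → Bool | ∀ i, z i ∈ L} := by
      rw [Set.ofPred_forall]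
      exact MeasurableSet.iInter fun i => measurable_pi_apply i hLm
    have hM := pi_null hLm hL
    rw [← hlaw, MeasureTheory.Measure.map_apply hf hMm, unitInterval.volume_apply] at hM
    refine ⟨⋃ n : ℤ, (fun r : ℝ => r - n) ⁻¹'
      (Subtype.val '' (f ⁻¹' {z : ℕ → ℕ → Bool | ∀ i, z i ∈ L})), ?_, ?_⟩
    · rw [MeasureTheory.measure_iUnion_null_iff]
      intro n
      simp only [sub_eq_add_neg]
      rw [MeasureTheory.measure_preimage_add_right]
      exact hM
    · intro r n u hru hfin
      rw [mem_iUnion]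
      refine ⟨n, u, fun i => ?_, hru.symm⟩
      have h1 : {k | f u i ∈ (C k).val}.Finite := by
        refine ((hfin i).preimage hCinj.injOn).subset ?_
        intro k hk
        exact ⟨(e k).2, hk⟩
      obtain ⟨b, hb⟩ := h1.bddAbove
      refine ⟨b + 1, fun k hk hmem => ?_⟩
      have := hb hmem
      omega
  choose! F hF0 hF using key
  refine ⟨F '' 𝒜, ?_, ?_, Cardinal.mk_image_le⟩
  · rintro _ ⟨A, hA, rfl⟩
    exact hF0 A hA
  · intro B hB
    let u : ℝ → unitInterval := fun r => ⟨Int.fract r, Int.fract_nonneg r, (Int.fract_lt_one r).le⟩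
    have hY : (⋃ i : ℕ, (fun r => f (u r) i) '' B).Countable :=
      Set.countable_iUnion fun i => hB.image _
    obtain ⟨y, hy⟩ := Set.countable_iff_exists_subset_range.1 hY
    obtain ⟨A, hA, hAfin⟩ := hc (fun n => {C : SoleckiBase | y n ∈ C.val})
      (fun n => ⟨{y n}, by simp⟩)
    refine ⟨F A, mem_image_of_mem F hA, fun r hr => ?_⟩
    refine hF A hA r ⌊r⌋ (u r) rfl (fun i => ?_)
    obtain ⟨n, hn⟩ := hy (mem_iUnion.2 ⟨i, mem_image_of_mem _ hr⟩)
    have := hAfin n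
    rw [hn] at this
    exact this

/-- `non*_ω(𝒮) = cov_ω(𝒩)` for the Solecki ideal `𝒮`. -/
theorem stmt12 : sInf (nonStarOmegaFam SoleckiIdeal) = covOmegaNull := by
  apply le_antisymm
  · refine le_csInf ?_ ?_
    · exact ⟨_, {N | MeasureTheory.volume N = 0}, fun N hN => hN,
        fun B hB => ⟨B, hB.measure_zero _, Subset.rfl⟩, rfl⟩
    · rintro _ ⟨𝒜, h0, hc, rfl⟩
      obtain ⟨c, hcm, hle⟩ := non_of_cov h0 hc
      exact (csInf_le' hcm).trans hle
  · refine le_csInf ?_ ?_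
    · obtain ⟨c, hcm, _⟩ := non_of_cov (𝒜 := {N | MeasureTheory.volume N = 0})
        (fun N hN => hN) (fun B hB => ⟨B, hB.measure_zero _, Subset.rfl⟩)
      exact ⟨c, hcm⟩
    · rintro _ ⟨𝒜, hi, hc, rfl⟩
      obtain ⟨𝒩, h0, hcov, hle⟩ := cov_of_non hi hc
      refine le_trans ?_ hle
      exact csInf_le' ⟨𝒩, h0, hcov, rfl⟩

end
end
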